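/- Let f_1 be a self-usage utility function and let 0 ≤ p < q < f_1'(0). Let s_{1a}, s_{1b} ∈ [0,1) satisfy f_1'(1−s_{1a}) = q and f_1'(1−s_{1b}) = p (so s_{1b} < s_{1a}). Then (q−p)·s_{1a} − (q−p)·s_{1b} − (f_1(1−s_{1b}) − f_1(1−s_{1a}) − p·(s_{1a} − s_{1b})) > 0. (This is the strict positivity of the threshold payoff B_a·t_a chosen by a platform running a linear loyalty program with bonus B_a = q − p against a competitor paying p and offering a sign-up bonus of at most (q−p)·s_{1b}; together with the companion bound this shows the linear-loyalty-program platform can always keep strictly positive revenue while forcing the sign-up-bonus platform out of the market.) -/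

import Mathlib

/-- A self-usage utility function `f` with derivative `f'`:
differentiable on `[0,1]`, strictly increasing on `[0,1]`,
strictly concave on `[0,1]` (with `f'` strictly decreasing), and `f' 1 = 0`. -/
def SelfUsage (f f' : ℝ → ℝ) : Prop :=
  (∀ x ∈ Set.Icc (0:ℝ) 1, HasDerivWithinAt f (f' x) (Set.Icc (0:ℝ) 1) x) ∧
  StrictMonoOn f (Set.Icc (0:ℝ) 1) ∧
  StrictConcaveOn ℝ (Set.Icc (0:ℝ) 1) f ∧
  StrictAntiOn f' (Set.Icc (0:ℝ) 1) ∧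
  f' 1 = 0

/-!
Since `(q - p) * (sa - sb) + p * (sa - sb) = q * (sa - sb)`, the price `p` cancels from the
threshold payoff. What remains, `f (1 - sa) + q * (sa - sb) - f (1 - sb)`, is the height at
`1 - sb` of the tangent line to `f` at `1 - sa` above the graph of `f`, which is positive by strict
concavity.
-/

theorem lt_add_mul_sub_of_strictConcaveOn_of_hasDerivWithinAt
    {S : Set ℝ} {f : ℝ → ℝ} {m x y : ℝ} (hf : StrictConcaveOn ℝ S f) (hx : x ∈ S) (hy : y ∈ S)
    (hxy : x ≠ y) (hm : HasDerivWithinAt f m S x) :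
    f y < f x + m * (y - x) := by
  rw [← sub_lt_iff_lt_add']
  rcases hxy.lt_or_gt with hlt | hgt
  · have hslope : slope f x y < m := hf.slope_lt_of_hasDerivWithinAt hx hy hlt hm
    rwa [slope_def_field, div_lt_iff₀ (sub_pos.2 hlt)] at hslope
  · have hslope : m < slope f x y :=
      slope_comm f y x ▸ hf.lt_slope_of_hasDerivWithinAt hy hx hgt hm
    rwa [slope_def_field, lt_div_iff_of_neg (sub_neg.2 hgt)] at hslope

theorem LLP_vs_signup_one_owner_positive_general
    {S : Set ℝ} {f : ℝ → ℝ} {q sa sb : ℝ} (hf : StrictConcaveOn ℝ S f)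
    (ha : 1 - sa ∈ S) (hb : 1 - sb ∈ S) (hab : sa ≠ sb)
    (hq : HasDerivWithinAt f q S (1 - sa)) (p : ℝ) :
    0 < (q - p) * sa - (q - p) * sb - (f (1 - sb) - f (1 - sa) - p * (sa - sb)) := by
  have htangent : f (1 - sb) < f (1 - sa) + q * ((1 - sb) - (1 - sa)) :=
    lt_add_mul_sub_of_strictConcaveOn_of_hasDerivWithinAt hf ha hb (sub_right_injective.ne hab) hq
  calc
    0 < f (1 - sa) + q * ((1 - sb) - (1 - sa)) - f (1 - sb) := sub_pos.2 htangent
    _ = (q - p) * sa - (q - p) * sb - (f (1 - sb) - f (1 - sa) - p * (sa - sb)) := by ring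

/-- strict positivity of the threshold payoff B_a·t_a of the
linear-loyalty-program platform against a competitor whose sign-up bonus is at
most (q−p)·s_{1b}. -/
theorem LLP_vs_signup_one_owner_positive
    (f f' : ℝ → ℝ) (hf : SelfUsage f f')
    (p q : ℝ) (hp : 0 ≤ p) (hpq : p < q) (hqf : q < f' 0)
    (s1a s1b : ℝ) (h1a : s1a ∈ Set.Ico (0:ℝ) 1) (h1b : s1b ∈ Set.Ico (0:ℝ) 1)
    (hda : f' (1 - s1a) = q) (hdb : f' (1 - s1b) = p) :
    0 < (q - p) * s1a - (q - p) * s1b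
        - (f (1 - s1b) - f (1 - s1a) - p * (s1a - s1b)) := by
  obtain ⟨hderiv, -, hconcave, -, -⟩ := hf
  have ha : 1 - s1a ∈ Set.Icc (0 : ℝ) 1 := Set.Icc.one_sub_mem (Set.Ico_subset_Icc_self h1a)
  have hb : 1 - s1b ∈ Set.Icc (0 : ℝ) 1 := Set.Icc.one_sub_mem (Set.Ico_subset_Icc_self h1b)
  have hab : s1a ≠ s1b := by
    rintro rfl
    exact hpq.ne (hdb.symm.trans hda)
  exact LLP_vs_signup_one_owner_positive_general hconcave ha hb hab (hda ▸ hderiv _ ha) p
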